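/- Mordell's inequality for Hermite constants: For every n ≥ 3 one has γₙ^{n−2} ≤ γ_{n−1}^{n−1}, equivalently γₙ ≤ γ_{n−1}^{(n−1)/(n−2)}. -/

import Mathlib

open Matrix

/-- The Hermite constant `γₙ`: the supremum over all positive definite quadratic
forms `Q(x) = xᵀAx` on `ℝⁿ` of `min{Q(x) : x ∈ ℤⁿ, x ≠ 0} / det(A)^(1/n)`. -/
noncomputable def hermiteConstant (n : ℕ) : ℝ :=
  sSup { r : ℝ | ∃ A : Matrix (Fin n) (Fin n) ℝ, A.PosDef ∧
    r = sInf { q : ℝ | ∃ x : Fin n → ℤ, x ≠ 0 ∧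
          q = (fun i => (x i : ℝ)) ⬝ᵥ A.mulVec (fun i => (x i : ℝ)) } /
        A.det ^ ((1 : ℝ) / n) }

/-- Value of the form `A` at an integer vector. -/
noncomputable def qf {n : ℕ} (A : Matrix (Fin n) (Fin n) ℝ) (x : Fin n → ℤ) : ℝ :=
  (fun i => (x i : ℝ)) ⬝ᵥ A.mulVec (fun i => (x i : ℝ))

/-- Infimum of the form `A` over nonzero integer vectors. -/
noncomputable def mn {n : ℕ} (A : Matrix (Fin n) (Fin n) ℝ) : ℝ :=
  sInf { q : ℝ | ∃ x : Fin n → ℤ, x ≠ 0 ∧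
          q = (fun i => (x i : ℝ)) ⬝ᵥ A.mulVec (fun i => (x i : ℝ)) }

lemma qf_pos {n : ℕ} {A : Matrix (Fin n) (Fin n) ℝ} (hA : A.PosDef) {x : Fin n → ℤ}
    (hx : x ≠ 0) : 0 < qf A x := by
  have h : (fun i => (x i : ℝ)) ≠ 0 := by
    intro h
    apply hx
    funext i
    have := congrFun h i
    simpa using this
  simpa [qf] using hA.dotProduct_mulVec_pos h

lemma mn_le {n : ℕ} {A : Matrix (Fin n) (Fin n) ℝ} (hA : A.PosDef) {x : Fin n → ℤ}
    (hx : x ≠ 0) : mn A ≤ qf A x := by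
  refine csInf_le ⟨0, ?_⟩ ⟨x, hx, rfl⟩
  rintro q ⟨z, hz, rfl⟩
  exact (qf_pos hA hz).le

lemma le_mn {n : ℕ} [NeZero n] {A : Matrix (Fin n) (Fin n) ℝ} {c : ℝ}
    (h : ∀ x : Fin n → ℤ, x ≠ 0 → c ≤ qf A x) : c ≤ mn A := by
  refine le_csInf ⟨_, Pi.single 0 1, by simp, rfl⟩ ?_
  rintro q ⟨z, hz, rfl⟩
  exact h z hz

lemma mn_nonneg {n : ℕ} [NeZero n] {A : Matrix (Fin n) (Fin n) ℝ} (hA : A.PosDef) : 0 ≤ mn A :=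
  le_mn fun _ hx => (qf_pos hA hx).le

lemma exists_unimodular {n : ℕ} (y : Fin n → ℤ) (hy : y ≠ 0) :
    ∃ U V : Matrix (Fin n) (Fin n) ℤ, U * V = 1 ∧ V * U = 1 ∧
      ∃ (j : Fin n) (c : ℤ), c ≠ 0 ∧ y = c • (fun i => U i j) := by
  obtain ⟨k, bM, bN, f, a, snf⟩ :=
    Submodule.smithNormalForm (Pi.basisFun ℤ (Fin n)) (Submodule.span ℤ {y})
  have hk : k = 1 := by
    have h1 := (LinearEquiv.toSpanNonzeroSingleton ℤ (Fin n → ℤ) y hy).finrank_eq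
    rw [Module.finrank_eq_card_basis bN] at h1
    simpa using h1.symm
  subst hk
  have hy' := bN.sum_repr ⟨y, Submodule.mem_span_singleton_self y⟩
  have hy'' := congrArg Subtype.val hy'
  simp only [Finset.univ_unique, Finset.sum_singleton, Submodule.coe_smul, snf, smul_smul] at hy''
  refine ⟨(Pi.basisFun ℤ (Fin n)).toMatrix bM, bM.toMatrix (Pi.basisFun ℤ (Fin n)),
    Module.Basis.toMatrix_mul_toMatrix_flip _ _, Module.Basis.toMatrix_mul_toMatrix_flip _ _,
    f default, bN.repr ⟨y, Submodule.mem_span_singleton_self y⟩ default * a default, ?_, ?_⟩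
  · intro h0
    rw [h0, zero_smul] at hy''
    exact hy hy''.symm
  · exact hy''.symm

lemma qf_smul {n : ℕ} (A : Matrix (Fin n) (Fin n) ℝ) (c : ℤ) (x : Fin n → ℤ) :
    qf A (c • x) = (c : ℝ) ^ 2 * qf A x := by
  have : (fun i => ((c • x) i : ℝ)) = (c : ℝ) • (fun i => (x i : ℝ)) := by
    funext i; simp
  simp only [qf, this, mulVec_smul, smul_dotProduct, dotProduct_smul, smul_eq_mul]
  ring

lemma qf_conj {n m : ℕ} (A : Matrix (Fin n) (Fin n) ℝ) (W : Matrix (Fin n) (Fin m) ℤ)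
    (x : Fin m → ℤ) :
    qf ((W.map (Int.cast : ℤ → ℝ))ᵀ * A * W.map (Int.cast : ℤ → ℝ)) x = qf A (W *ᵥ x) := by
  have : (fun i => ((W *ᵥ x) i : ℝ)) = W.map (Int.cast : ℤ → ℝ) *ᵥ (fun i => (x i : ℝ)) := by
    funext i; simp [mulVec, dotProduct]
  simp only [qf, this]
  rw [← mulVec_mulVec, ← mulVec_mulVec, dotProduct_mulVec, vecMul_transpose]

lemma map_mul_one {n : ℕ} {U V : Matrix (Fin n) (Fin n) ℤ} (h : U * V = 1) :
    U.map (Int.cast : ℤ → ℝ) * V.map (Int.cast : ℤ → ℝ) = 1 := by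
  have := congrArg (fun M : Matrix (Fin n) (Fin n) ℤ => M.map (Int.castRingHom ℝ)) h
  simp only [Matrix.map_mul, Matrix.map_one, map_zero, map_one] at this
  exact this

lemma posDef_conj {n : ℕ} {A : Matrix (Fin n) (Fin n) ℝ} (hA : A.PosDef)
    {X Y : Matrix (Fin n) (Fin n) ℝ} (h : Y * X = 1) : (Xᵀ * A * X).PosDef := by
  have := hA.conjTranspose_mul_mul_same (B := X) (by
    intro a b hab
    have h2 := congrArg (Y *ᵥ ·) hab
    simpa [mulVec_mulVec, h] using h2)
  simpa [conjTranspose_eq_transpose_of_trivial] using this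

lemma det_conj {n : ℕ} (A : Matrix (Fin n) (Fin n) ℝ)
    {U V : Matrix (Fin n) (Fin n) ℤ} (h : U * V = 1) :
    ((U.map (Int.cast : ℤ → ℝ))ᵀ * A * U.map (Int.cast : ℤ → ℝ)).det = A.det := by
  have h1 : U.det * V.det = 1 := by rw [← det_mul, h, det_one]
  have h2 : U.det * U.det = 1 := by
    rcases Int.isUnit_iff.1 (IsUnit.of_mul_eq_one _ h1) with h | h <;> simp [h]
  have h3 : (U.map (Int.cast : ℤ → ℝ)).det = (U.det : ℝ) := by
    simpa using (Int.castRingHom ℝ).map_det U |>.symm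
  have h4 : (U.det : ℝ) * U.det = 1 := by exact_mod_cast h2
  rw [det_mul, det_mul, det_transpose, h3]
  linear_combination A.det * h4

/-- The set whose supremum is the Hermite constant. -/
def hset (n : ℕ) : Set ℝ :=
  { r : ℝ | ∃ A : Matrix (Fin n) (Fin n) ℝ, A.PosDef ∧ r = mn A / A.det ^ ((1 : ℝ) / n) }

lemma hermite_eq (n : ℕ) : hermiteConstant n = sSup (hset n) := rfl

lemma step {m : ℕ} (hm : 1 ≤ m) {g : ℝ} (hg : ∀ r ∈ hset m, r ≤ g)
    {A : Matrix (Fin (m + 1)) (Fin (m + 1)) ℝ} (hA : A.PosDef) :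
    mn A ^ m ≤ g ^ m * A.det * mn A⁻¹ := by
  have : NeZero m := ⟨by omega⟩
  have hg0 : 0 ≤ g := by
    refine le_trans ?_ (hg _ ⟨1, PosDef.one, rfl⟩)
    exact div_nonneg (mn_nonneg PosDef.one) (by simp)
  have hd : 0 < A.det := hA.det_pos
  -- it suffices to treat every nonzero dual vector
  suffices H : ∀ y : Fin (m + 1) → ℤ, y ≠ 0 → mn A ^ m ≤ g ^ m * A.det * qf A⁻¹ y by
    rcases hg0.eq_or_lt with h0 | h0
    · have := H (Pi.single 0 1) (by simp)
      rw [← h0, zero_pow (by omega)] at this ⊢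
      simpa using this
    · have hc : 0 < g ^ m * A.det := by positivity
      rw [mul_comm, ← div_le_iff₀ hc]
      refine le_mn fun y hy => ?_
      rw [div_le_iff₀ hc, mul_comm]
      exact H y hy
  intro y hy
  obtain ⟨U, V, hUV, hVU, j, c, hc, rfl⟩ := exists_unimodular y hy
  have hcol : (fun i => U i j) ≠ 0 := by
    intro h
    rw [h, smul_zero] at hy
    exact hy rfl
  have hq := qf_pos hA.inv hcol
  have hc1 : (1 : ℝ) ≤ (c : ℝ) ^ 2 := by
    have : 1 ≤ c ^ 2 := by
      have := sq_pos_of_ne_zero hc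
      omega
    exact_mod_cast this
  suffices H : mn A ^ m ≤ g ^ m * A.det * qf A⁻¹ (fun i => U i j) by
    rw [qf_smul]
    refine H.trans (mul_le_mul_of_nonneg_left ?_ (by positivity))
    nlinarith
  have hVT : Uᵀ * Vᵀ = 1 := by rw [← transpose_mul, hVU, transpose_one]
  have hVT' : Vᵀ * Uᵀ = 1 := by rw [← transpose_mul, hUV, transpose_one]
  set X : Matrix (Fin (m + 1)) (Fin (m + 1)) ℝ := Vᵀ.map (Int.cast : ℤ → ℝ) with hX
  set Y : Matrix (Fin (m + 1)) (Fin (m + 1)) ℝ := U.map (Int.cast : ℤ → ℝ) with hY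
  have hXY : Yᵀ * X = 1 := map_mul_one hVT
  have hXY' : X * Yᵀ = 1 := map_mul_one hVT'
  have hXY2 : Xᵀ * Y = 1 := by
    have := congrArg transpose hXY
    simpa using this
  set A' := Xᵀ * A * X with hA'
  have hA'p : A'.PosDef := posDef_conj hA hXY
  have hA'd : A'.det = A.det := det_conj A hVT'
  have hA'i : A'⁻¹ = Yᵀ * A⁻¹ * Y := by
    apply inv_eq_right_inv
    calc A' * (Yᵀ * A⁻¹ * Y) = Xᵀ * A * (X * Yᵀ) * A⁻¹ * Y := by
          simp only [hA', Matrix.mul_assoc]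
      _ = Xᵀ * (A * A⁻¹) * Y := by rw [hXY', Matrix.mul_one]; simp only [Matrix.mul_assoc]
      _ = 1 := by
          rw [mul_nonsing_inv _ (isUnit_iff_ne_zero.2 hd.ne'), Matrix.mul_one, hXY2]
  have hij : A'⁻¹ j j = qf A⁻¹ (fun i => U i j) := by
    rw [hA'i]
    simp only [qf, hY, Matrix.mul_apply, dotProduct, mulVec, transpose_apply, map_apply,
      Finset.sum_mul, Finset.mul_sum]
    rw [Finset.sum_comm]
    simp only [mul_assoc]
  set C := A'.submatrix j.succAbove j.succAbove with hC
  have hCp : C.PosDef := hA'p.submatrix Fin.succAbove_right_injective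
  have hCd : C.det = A.det * qf A⁻¹ (fun i => U i j) := by
    have h1 := adjugate_fin_succ_eq_det_submatrix A' j j
    rw [Even.neg_one_pow ⟨_, rfl⟩, one_mul] at h1
    rw [hC, ← h1, ← hij, inv_def, hA'd, Ring.inverse_eq_inv]
    simp [hd.ne']
  have hmn : mn A ≤ mn C := by
    refine le_mn fun x hx => ?_
    let E : Matrix (Fin (m + 1)) (Fin m) ℤ := (1 : Matrix _ _ ℤ).submatrix id j.succAbove
    have hCE : C = ((Vᵀ * E).map (Int.cast : ℤ → ℝ))ᵀ * A * (Vᵀ * E).map (Int.cast : ℤ → ℝ) := by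
      have h1 : (Vᵀ * E).map (Int.cast : ℤ → ℝ) = X.submatrix id j.succAbove := by
        ext a b
        simp [E, Matrix.mul_apply, Matrix.one_apply, hX]
      rw [h1]
      ext a b
      simp [hC, hA', Matrix.mul_apply]
    rw [hCE, qf_conj]
    apply mn_le hA
    intro h0
    apply hx
    rw [← mulVec_mulVec] at h0
    have h1 := congrArg (Uᵀ *ᵥ ·) h0
    simp only [mulVec_mulVec, hVT, mulVec_zero, ← Matrix.mul_assoc, Matrix.one_mul] at h1
    funext a
    have h2 := congrFun h1 (j.succAbove a)
    simpa [E, mulVec, dotProduct, Matrix.one_apply] using h2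
  have hgC := hg _ ⟨C, hCp, rfl⟩
  have hCd0 := hCp.det_pos
  rw [div_le_iff₀ (by positivity)] at hgC
  calc mn A ^ m ≤ (g * C.det ^ ((1 : ℝ) / m)) ^ m :=
        pow_le_pow_left₀ (mn_nonneg hA) (hmn.trans hgC) m
    _ = g ^ m * C.det := by
        rw [mul_pow, one_div, Real.rpow_inv_natCast_pow hCd0.le (by omega)]
    _ = _ := by rw [hCd]; ring

lemma mordell_step {m : ℕ} (hm : 1 ≤ m) {g : ℝ} (hg : ∀ r ∈ hset m, r ≤ g)
    {r : ℝ} (hr : r ∈ hset (m + 1)) : r ^ (m - 1) ≤ g ^ m ∨ r = 0 := by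
  have : NeZero m := ⟨by omega⟩
  have hg0 : 0 ≤ g := by
    refine le_trans ?_ (hg _ ⟨1, PosDef.one, rfl⟩)
    exact div_nonneg (mn_nonneg PosDef.one) (by simp)
  obtain ⟨A, hA, rfl⟩ := hr
  have hd : 0 < A.det := hA.det_pos
  have h1 := step hm hg hA
  have h2 := step hm hg hA.inv
  rw [nonsing_inv_nonsing_inv _ (isUnit_iff_ne_zero.2 hd.ne'), det_nonsing_inv, Ring.inverse_eq_inv] at h2
  obtain ⟨k, rfl⟩ : ∃ k, m = k + 1 := ⟨m - 1, by omega⟩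
  have ha := mn_nonneg hA
  have hb := mn_nonneg hA.inv
  rcases ha.eq_or_lt with h0 | h0
  · right
    rw [← h0, zero_div]
  left
  set a := mn A
  set b := mn A⁻¹
  set t := A.det ^ ((1 : ℝ) / ((k + 1 + 1 : ℕ) : ℝ)) with ht
  have ht0 : 0 < t := by positivity
  have htd : t ^ (k + 2) = A.det := by
    rw [ht, one_div, Real.rpow_inv_natCast_pow hd.le (by omega)]
  rw [Nat.add_sub_cancel, div_pow, div_le_iff₀ (by positivity)]
  set G := g ^ (k + 1)
  have hG : 0 ≤ G := by positivity
  set d := A.det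
  have h3 : (a ^ (k + 1)) ^ (k + 1) ≤ (G * d * b) ^ (k + 1) :=
    pow_le_pow_left₀ (by positivity) h1 _
  have h4 : (G * d * b) ^ (k + 1) ≤ (G * d) ^ (k + 1) * (G * d⁻¹ * a) := by
    rw [mul_pow]
    exact mul_le_mul_of_nonneg_left h2 (by positivity)
  have h5 : (G * d) ^ (k + 1) * (G * d⁻¹ * a) = (G * t ^ k) ^ (k + 2) * a := by
    have : (t ^ k) ^ (k + 2) = d ^ k := by rw [← htd, ← pow_mul, ← pow_mul, mul_comm]
    rw [mul_pow G (t ^ k), this]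
    field_simp
    ring
  have h6 : (a ^ (k + 1)) ^ (k + 1) = (a ^ k) ^ (k + 2) * a := by ring
  have h7 : (a ^ k) ^ (k + 2) * a ≤ (G * t ^ k) ^ (k + 2) * a := by
    rw [← h6, ← h5]
    exact h3.trans h4
  have h8 := le_of_mul_le_mul_right h7 h0
  exact le_of_pow_le_pow_left₀ (by omega) (by positivity) h8

lemma red_two {B : Matrix (Fin 2) (Fin 2) ℝ} (hB : B.PosDef) {μ : ℝ} (hμ : 0 < μ)
    (h : ∀ x : Fin 2 → ℤ, x ≠ 0 → μ ≤ qf B x) (j : Fin 2) (hp : B j j < 2 * μ) :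
    μ ^ 2 ≤ 2 * B.det := by
  have hs : B 1 0 = B 0 1 := by
    have := hB.isHermitian.apply 0 1
    simpa using this
  have key : ∀ p q s : ℝ, 0 < p → μ ≤ p → p < 2 * μ →
      (∀ t : ℤ, μ ≤ s - 2 * t * q + t ^ 2 * p) → μ ^ 2 ≤ 2 * (p * s - q ^ 2) := by
    intro p q s hp0 hp1 hp2 hT
    have h1 := hT (round (q / p))
    have h2 := abs_sub_round (q / p)
    set t : ℝ := (round (q / p) : ℝ)
    have hq : q = p * (q / p) := by field_simp
    set u := q / p
    have h3 : (u - t) ^ 2 ≤ 1 / 4 := by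
      have := abs_le.1 h2
      nlinarith
    have h4 : p * s - q ^ 2 = p * (s - 2 * t * q + t ^ 2 * p) - p ^ 2 * (u - t) ^ 2 := by
      rw [hq]; ring
    have h5 : p * μ ≤ p * (s - 2 * t * q + t ^ 2 * p) := mul_le_mul_of_nonneg_left h1 hp0.le
    have h6 : p ^ 2 * (u - t) ^ 2 ≤ p ^ 2 * (1 / 4) := mul_le_mul_of_nonneg_left h3 (by positivity)
    rw [h4]
    nlinarith
  rw [det_fin_two, hs]
  fin_cases j
  · have h1 := h ![1, 0] (by intro h; simpa using congrFun h 0)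
    have := key (B 0 0) (B 0 1) (B 1 1) hB.diag_pos (by simpa [qf, dotProduct, mulVec] using h1)
      hp (by
        intro t
        have h2 := h ![-t, 1] (by intro h; simpa using congrFun h 1)
        simp [qf, dotProduct, mulVec, Fin.sum_univ_two, hs] at h2
        linarith)
    linarith
  · have h1 := h ![0, 1] (by intro h; simpa using congrFun h 1)
    have := key (B 1 1) (B 0 1) (B 0 0) hB.diag_pos
      (by simpa [qf, dotProduct, mulVec] using h1)
      hp (by
        intro t
        have h2 := h ![1, -t] (by intro h; simpa using congrFun h 0)
        simp [qf, dotProduct, mulVec, Fin.sum_univ_two, hs] at h2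
        linarith)
    linarith

lemma mn_two {A : Matrix (Fin 2) (Fin 2) ℝ} (hA : A.PosDef) : mn A ^ 2 ≤ 2 * A.det := by
  rcases (mn_nonneg hA).eq_or_lt with h0 | h0
  · have := hA.det_pos
    rw [← h0]
    linarith
  obtain ⟨q, ⟨y, hy, rfl⟩, hq⟩ := exists_lt_of_csInf_lt
    (s := { q : ℝ | ∃ x : Fin 2 → ℤ, x ≠ 0 ∧
          q = (fun i => (x i : ℝ)) ⬝ᵥ A.mulVec (fun i => (x i : ℝ)) })
    ⟨_, Pi.single 0 1, by simp, rfl⟩ (show mn A < 2 * mn A by linarith)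
  change qf A y < _ at hq
  obtain ⟨U, V, hUV, hVU, j, c, hc, rfl⟩ := exists_unimodular y hy
  have hcol : (fun i => U i j) ≠ 0 := by
    intro h
    rw [h, smul_zero] at hy
    exact hy rfl
  have hc1 : (1 : ℝ) ≤ (c : ℝ) ^ 2 := by
    have : 1 ≤ c ^ 2 := by
      have := sq_pos_of_ne_zero hc
      omega
    exact_mod_cast this
  have hqp := qf_pos hA hcol
  rw [qf_smul] at hq
  rw [← det_conj A hUV]
  refine red_two (posDef_conj hA (map_mul_one hVU)) h0 (fun x hx => ?_) j ?_
  · rw [qf_conj]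
    apply mn_le hA
    intro h
    apply hx
    have := congrArg (V *ᵥ ·) h
    simpa only [mulVec_mulVec, hVU, one_mulVec, mulVec_zero] using this
  · refine lt_of_eq_of_lt ?_ (lt_of_le_of_lt (by nlinarith : qf A (fun i => U i j) ≤ _) hq)
    simp only [qf, Matrix.mul_apply, dotProduct, mulVec, transpose_apply, map_apply,
      Finset.sum_mul, Finset.mul_sum]
    rw [Finset.sum_comm]
    simp only [mul_assoc]

lemma hset_nonneg {n : ℕ} (hn : 1 ≤ n) {r : ℝ} (hr : r ∈ hset n) : 0 ≤ r := by
  have : NeZero n := ⟨by omega⟩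
  obtain ⟨A, hA, rfl⟩ := hr
  have := hA.det_pos
  exact div_nonneg (mn_nonneg hA) (by positivity)

lemma hset_bdd {n : ℕ} (hn : 2 ≤ n) : BddAbove (hset n) := by
  induction n, hn using Nat.le_induction with
  | base =>
    refine ⟨2, ?_⟩
    rintro r ⟨A, hA, rfl⟩
    have hd := hA.det_pos
    rw [div_le_iff₀ (by positivity)]
    have h1 := mn_two hA
    have h2 : (A.det ^ ((1 : ℝ) / (2 : ℕ))) ^ 2 = A.det := by
      rw [one_div, Real.rpow_inv_natCast_pow hd.le (by omega)]
    refine le_of_pow_le_pow_left₀ two_ne_zero (by positivity) ?_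
    rw [mul_pow, h2]
    linarith
  | succ m hm ih =>
    obtain ⟨g, hg⟩ := ih
    refine ⟨max 1 (g ^ m), fun r hr => ?_⟩
    have h0 := hset_nonneg (by omega) hr
    rcases le_total r 1 with h1 | h1
    · exact h1.trans (le_max_left _ _)
    rcases mordell_step (by omega) (fun r hr => hg hr) hr with h | h
    · exact ((le_self_pow₀ h1 (by omega)).trans h).trans (le_max_right _ _)
    · linarith

theorem mordell_inequality (n : ℕ) (hn : 3 ≤ n) :
    hermiteConstant n ^ (n - 2) ≤ hermiteConstant (n - 1) ^ (n - 1) := by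
  obtain ⟨m, rfl⟩ : ∃ m, n = m + 1 := ⟨n - 1, by omega⟩
  rw [hermite_eq, hermite_eq, Nat.add_sub_cancel]
  have hm : m + 1 - 2 = m - 1 := by omega
  rw [hm]
  have hG0 : 0 ≤ sSup (hset m) := Real.sSup_nonneg fun r hr => hset_nonneg (by omega) hr
  have hG : ∀ r ∈ hset m, r ≤ sSup (hset m) := fun r hr => le_csSup (hset_bdd (by omega)) hr
  set G := sSup (hset m)
  have hc : ((G ^ m) ^ (((m - 1 : ℕ) : ℝ)⁻¹)) ^ (m - 1) = G ^ m :=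
    Real.rpow_inv_natCast_pow (by positivity) (by omega)
  rw [← hc]
  refine pow_le_pow_left₀ (Real.sSup_nonneg fun r hr => hset_nonneg (by omega) hr) ?_ _
  refine Real.sSup_le (fun r hr => ?_) (by positivity)
  rcases mordell_step (by omega) hG hr with h | h
  · refine le_of_pow_le_pow_left₀ (n := m - 1) (by omega) (by positivity) ?_
    rwa [hc]
  · rw [h]
    positivity
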